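/- Existence principle (Theorem 2.1): Assume (h1) and (h2). Assume moreover (h3⁰): whenever u ∈ Ū, λ ∈ (0,1) and u(t) = λ·N(u)(t) for all t ∈ [0,a], then ‖u(t)‖ < R(t) for all t ∈ [0,a]; and (h4⁰): for every countable set C ⊆ Ū with C ⊆ closure(convexHull({0} ∪ N(C))) taken in C([0,a];X), the closure of C is compact in C([0,a];X). Then N has a fixed point in Ū, i.e. the nonlocal problem has a mild solution in Ū. -/

import Mathlib

open MeasureTheory

/-- The set `Ū` of continuous functions `u : [0,a] → X` with `‖u t‖ ≤ R t` for all `t`. -/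
def UbarSet {X : Type*} [NormedAddCommGroup X] (a : ℝ) (R : ℝ → ℝ) :
    Set C(Set.Icc (0:ℝ) a, X) :=
  {u | ∀ t : Set.Icc (0:ℝ) a, ‖u t‖ ≤ R t}

section Comb

lemma aux_double {α β : Type*} [DecidableEq α] [DecidableEq β] (f : α → β) (S : Finset α)
    (h : (S.image f).card + 1 = S.card) :
    ∃ a ∈ S, ∃ b ∈ S, a ≠ b ∧ ∀ v ∈ S, ((S.erase v).image f = S.image f ↔ v = a ∨ v = b) := by
  obtain ⟨a, ha, b, hb, hab, hf⟩ : ∃ a ∈ S, ∃ b ∈ S, a ≠ b ∧ f a = f b :=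
    Finset.exists_ne_map_eq_of_card_lt_of_maps_to (t := S.image f) (by omega)
      (fun x hx => Finset.mem_image_of_mem f hx)
  have key : ∀ v ∈ S, (∃ w ∈ S, w ≠ v ∧ f w = f v) → (S.erase v).image f = S.image f := by
    rintro v hv ⟨w, hw, hwv, hfw⟩
    apply Finset.Subset.antisymm (Finset.image_subset_image (Finset.erase_subset _ _))
    intro y hy
    obtain ⟨x, hx, rfl⟩ := Finset.mem_image.1 hy
    by_cases hxv : x = v
    · subst hxv
      exact Finset.mem_image.2 ⟨w, Finset.mem_erase.2 ⟨hwv, hw⟩, hfw⟩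
    · exact Finset.mem_image.2 ⟨x, Finset.mem_erase.2 ⟨hxv, hx⟩, rfl⟩
  have inj : ∀ v ∈ S, (S.erase v).image f = S.image f → Set.InjOn f (S.erase v) := by
    intro v hv hi
    apply Finset.injOn_of_card_image_eq
    rw [hi, Finset.card_erase_of_mem hv]; omega
  refine ⟨a, ha, b, hb, hab, fun v hv => ⟨fun hi => ?_, ?_⟩⟩
  · by_contra hne
    push Not at hne
    have := inj v hv hi (Finset.mem_coe.2 (Finset.mem_erase.2 ⟨hne.1.symm, ha⟩))
      (Finset.mem_coe.2 (Finset.mem_erase.2 ⟨hne.2.symm, hb⟩)) hf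
    exact hab this
  · rintro (rfl | rfl)
    · exact key _ hv ⟨b, hb, hab.symm, hf.symm⟩
    · exact key _ hv ⟨a, ha, hab, hf⟩

variable {T I L : Type*} [Fintype T] [DecidableEq T] [Fintype I] [DecidableEq I] [LinearOrder L]

def DomP (r : I → T → L) (D : Finset T) (C : Finset I) : Prop :=
  ∀ t, ∃ i ∈ C, ∀ d ∈ D, r i t ≤ r i d

def ExtP (r : I → T → L) (D : Finset T) (C : Finset I) : T ⊕ I → Prop
  | Sum.inl x => x ∉ D ∧ DomP r (insert x D) C
  | Sum.inr i => i ∈ C ∧ DomP r D (C.erase i)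

def TypP (r : I → T → L) (μ : I → T) (C : Finset I) (k : I) : T ⊕ I → Prop
  | Sum.inl x => ∀ l ∈ C.erase k, r l (μ l) < r l x
  | Sum.inr i => i = k

lemma ridge_two (r : I → T → L) (hr : ∀ i, Function.Injective (r i)) (D : Finset T)
    (C : Finset I) (hD : D.Nonempty) (hcard : C.card = D.card + 1) (h : DomP r D C) :
    ∃ v w : T ⊕ I, v ≠ w ∧ ∀ z, ExtP r D C z ↔ z = v ∨ z = w := by
  have hμ' : ∀ i, ∃ m ∈ D, ∀ d ∈ D, r i m ≤ r i d := fun i => Finset.exists_min_image D (r i) hD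
  choose μ hμD hμ using hμ'
  have hsurj : ∀ C', DomP r D C' → C'.image μ = D := by
    intro C' h'
    apply Finset.Subset.antisymm
    · intro y hy
      obtain ⟨x, hx, rfl⟩ := Finset.mem_image.1 hy
      exact hμD x
    · intro d hd
      obtain ⟨i, hi, hid⟩ := h' d
      exact Finset.mem_image.2 ⟨i, hi, hr i (le_antisymm (hμ i d hd) (hid _ (hμD i)))⟩
  have hCD := hsurj C h
  obtain ⟨i, hi, j, hj, hij, hdup⟩ := aux_double μ C (by rw [hCD]; omega)
  rw [hCD] at hdup
  -- every extension has a type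
  have htype : ∀ z, ExtP r D C z → TypP r μ C i z ∨ TypP r μ C j z := by
    rintro (x | m) hz
    · obtain ⟨hxD, hdom⟩ := hz
      obtain ⟨k, hk, hkx⟩ := hdom x
      have hd : ∀ d ∈ D, ∃ l ∈ C, μ l = d ∧ r l d < r l x := by
        intro d hd
        obtain ⟨l, hl, hld⟩ := hdom d
        refine ⟨l, hl, hr l (le_antisymm (hμ l d hd) (hld _ (Finset.mem_insert_of_mem (hμD l)))), ?_⟩
        refine lt_of_le_of_ne (hld x (Finset.mem_insert_self _ _)) ?_
        intro he
        exact hxD (hr l he ▸ hd)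
      have hkk : (C.erase k).image μ = D := by
        apply Finset.Subset.antisymm
        · intro y hy
          obtain ⟨x, hx, rfl⟩ := Finset.mem_image.1 hy
          exact hμD x
        · intro d hdD
          obtain ⟨l, hl, hl1, hl2⟩ := hd d hdD
          refine Finset.mem_image.2 ⟨l, Finset.mem_erase.2 ⟨?_, hl⟩, hl1⟩
          rintro rfl
          exact absurd (hkx d (Finset.mem_insert_of_mem hdD)) (not_le.2 hl2)
      have hT : TypP r μ C k (Sum.inl x) := by
        intro l hl
        by_contra hlt
        push Not at hlt
        have hsub : D ⊆ ((C.erase k).erase l).image μ := by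
          intro d hdD
          obtain ⟨l', hl', hl1, hl2⟩ := hd d hdD
          refine Finset.mem_image.2 ⟨l', Finset.mem_erase.2 ⟨?_, Finset.mem_erase.2 ⟨?_, hl'⟩⟩, hl1⟩
          · rintro rfl
            rw [hl1] at hlt
            exact absurd hlt (not_le.2 hl2)
          · rintro rfl
            exact absurd (hkx d (Finset.mem_insert_of_mem hdD)) (not_le.2 hl2)
        have h1 := (Finset.card_le_card hsub).trans Finset.card_image_le
        rw [Finset.card_erase_of_mem hl, Finset.card_erase_of_mem hk] at h1
        have := hD.card_pos
        omega
      rcases (hdup k hk).1 hkk with rfl | rfl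
      · exact Or.inl hT
      · exact Or.inr hT
    · obtain ⟨hm, hdom⟩ := hz
      exact (hdup m hm).1 (hsurj _ hdom)
  have hnot : ∀ z, ExtP r D C z → TypP r μ C i z → TypP r μ C j z → False := by
    rintro (x | m) hz h1 h2
    · obtain ⟨l, hl, hlx⟩ := h x
      have hle := hlx _ (hμD l)
      by_cases hli : l = i
      · subst hli
        exact absurd (h2 l (Finset.mem_erase.2 ⟨hij, hl⟩)) (not_lt.2 hle)
      · exact absurd (h1 l (Finset.mem_erase.2 ⟨hli, hl⟩)) (not_lt.2 hle)
    · exact hij (h1.symm.trans h2)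
  have hex : ∀ k ∈ C, (C.erase k).image μ = D →
      ∃ v, ExtP r D C v ∧ TypP r μ C k v ∧ ∀ z, ExtP r D C z → TypP r μ C k z → z = v := by
    intro k hk hkD
    classical
    set A : Finset T := Finset.univ.filter (fun t => ∀ l ∈ C.erase k, r l (μ l) < r l t) with hA
    have hmem : ∀ t, t ∈ A ↔ ∀ l ∈ C.erase k, r l (μ l) < r l t := by
      intro t; simp [hA]
    rcases A.eq_empty_or_nonempty with hAe | hAn
    · refine ⟨Sum.inr k, ⟨hk, ?_⟩, rfl, ?_⟩
      · intro t
        have : t ∉ A := by rw [hAe]; simp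
        rw [hmem] at this
        push Not at this
        obtain ⟨l, hl, hlt⟩ := this
        exact ⟨l, hl, fun d hd => hlt.trans (hμ l d hd)⟩
      · rintro (x | m) hz hT
        · have : x ∈ A := (hmem x).2 hT
          rw [hAe] at this
          simp at this
        · have : m = k := hT
          rw [this]
    · obtain ⟨x, hxA, hx⟩ := Finset.exists_max_image A (r k) hAn
      have hxA' := (hmem x).1 hxA
      have hxD : x ∉ D := by
        intro hxD
        rw [← hkD] at hxD
        obtain ⟨l, hl, rfl⟩ := Finset.mem_image.1 hxD
        exact lt_irrefl _ (hxA' l hl)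
      have hxk : ∀ y ∈ A, ∀ d ∈ D, r k y ≤ r k d := by
        intro y hy
        obtain ⟨l, hl, hlx⟩ := h y
        by_cases hlk : l = k
        · subst hlk; exact hlx
        · exact absurd ((hmem y).1 hy l (Finset.mem_erase.2 ⟨hlk, hl⟩)) (not_lt.2 (hlx _ (hμD l)))
      refine ⟨Sum.inl x, ⟨hxD, ?_⟩, hxA', ?_⟩
      · intro t
        by_cases htA : t ∈ A
        · refine ⟨k, hk, fun d hd => ?_⟩
          rcases Finset.mem_insert.1 hd with rfl | hd
          · exact hx t htA
          · exact hxk t htA d hd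
        · rw [hmem] at htA
          push Not at htA
          obtain ⟨l, hl, hlt⟩ := htA
          refine ⟨l, Finset.mem_of_mem_erase hl, fun d hd => ?_⟩
          rcases Finset.mem_insert.1 hd with rfl | hd
          · exact hlt.trans (hxA' l hl).le
          · exact hlt.trans (hμ l d hd)
      · rintro (y | m) hz hT
        · have hyA : y ∈ A := (hmem y).2 hT
          obtain ⟨hyD, hdom⟩ := hz
          obtain ⟨l, hl, hlx⟩ := hdom x
          have hlk : l = k := by
            by_contra hlk
            exact absurd (hxA' l (Finset.mem_erase.2 ⟨hlk, hl⟩))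
              (not_lt.2 (hlx _ (Finset.mem_insert_of_mem (hμD l))))
          subst hlk
          have := hr l (le_antisymm (hx y hyA) (hlx y (Finset.mem_insert_self _ _)))
          rw [this]
        · have hm : m = k := hT
          subst hm
          obtain ⟨-, hdom⟩ := hz
          obtain ⟨l, hl, hlx⟩ := hdom x
          exact absurd (hxA' l hl) (not_lt.2 (hlx _ (hμD l)))
  obtain ⟨v, hv1, hv2, hv3⟩ := hex i hi ((hdup i hi).2 (Or.inl rfl))
  obtain ⟨w, hw1, hw2, hw3⟩ := hex j hj ((hdup j hj).2 (Or.inr rfl))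
  refine ⟨v, w, ?_, fun z => ⟨fun hz => ?_, ?_⟩⟩
  · rintro rfl
    exact hnot v hv1 hv2 hw2
  · rcases htype z hz with ht | ht
    · exact Or.inl (hv3 z hz ht)
    · exact Or.inr (hw3 z hz ht)
  · rintro (rfl | rfl)
    · exact hv1
    · exact hw1

end Comb
section Comb2
variable {T I L : Type*} [Fintype T] [DecidableEq T] [Fintype I] [DecidableEq I] [LinearOrder L]

lemma ext_iff_aux (r : I → T → L) (S : Finset (T ⊕ I)) (z : T ⊕ I) :
    (z ∉ S ∧ DomP r (insert z S).toLeft ((insert z S).toRight)ᶜ) ↔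
      ExtP r S.toLeft (S.toRight)ᶜ z := by
  rcases z with x | m
  · simp [ExtP]
  · simp [ExtP, Finset.compl_insert]

lemma sperner_aux (r : I → T → L) (hr : ∀ i, Function.Injective (r i)) [Nonempty T]
    (c : T → I) (i0 : I) :
    ∃ (D : Finset T) (C : Finset I), DomP r D C ∧ C ⊆ D.image c := by
  classical
  set κ : T ⊕ I → I := Sum.elim c id with hκ
  set Dom : Finset (T ⊕ I) → Prop := fun S => DomP r S.toLeft (S.toRight)ᶜ with hDom
  have hmono : ∀ S S', S ⊆ S' → Dom S' → Dom S := by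
    intro S S' hs h t
    obtain ⟨i, hi, hit⟩ := h t
    refine ⟨i, ?_, fun d hd => hit d (Finset.toLeft_subset_toLeft hs hd)⟩
    rw [Finset.mem_compl] at hi ⊢
    exact fun h => hi (Finset.toRight_subset_toRight hs h)
  set doors : Finset (Finset (T ⊕ I)) := Finset.univ.filter
    (fun S => Dom S ∧ S.image κ = Finset.univ.erase i0 ∧ S.card + 1 = Fintype.card I) with hdoors
  set rooms : Finset (Finset (T ⊕ I)) := Finset.univ.filter
    (fun S => Dom S ∧ S.card = Fintype.card I) with hrooms
  by_contra hcon
  have hfull : ∀ S, Dom S → S.image κ ≠ Finset.univ := by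
    intro S hS hu
    apply hcon
    refine ⟨S.toLeft, (S.toRight)ᶜ, hS, ?_⟩
    intro i hi
    have : i ∈ S.image κ := by rw [hu]; exact Finset.mem_univ _
    obtain ⟨z, hz, hzi⟩ := Finset.mem_image.1 this
    rcases z with x | m
    · exact Finset.mem_image.2 ⟨x, Finset.mem_toLeft.2 hz, hzi⟩
    · have hmi : m = i := hzi
      subst hmi
      rw [Finset.mem_compl] at hi
      exact absurd (Finset.mem_toRight.2 hz) hi
  have hcount := Finset.sum_card_bipartiteAbove_eq_sum_card_bipartiteBelow
    (s := doors) (t := rooms) (fun S S' => S ⊆ S')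
  have heven : Even (∑ b ∈ rooms, (Finset.bipartiteBelow (fun S S' => S ⊆ S') doors b).card) := by
    apply Finset.even_sum
    intro S hS
    obtain ⟨hSd, hSc⟩ := (Finset.mem_filter.1 hS).2
    rcases (Finset.bipartiteBelow (fun S S' => S ⊆ S') doors S).eq_empty_or_nonempty with he | hne
    · rw [he]; simp
    · obtain ⟨S1, hS1⟩ := hne
      rw [Finset.mem_bipartiteBelow] at hS1
      obtain ⟨hS1, hsub⟩ := hS1
      obtain ⟨-, -, h2, h3⟩ := Finset.mem_filter.1 hS1
      have him : S.image κ = Finset.univ.erase i0 := by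
        have h4 : Finset.univ.erase i0 ⊆ S.image κ := h2 ▸ Finset.image_subset_image hsub
        apply Finset.Subset.antisymm _ h4
        intro y hy
        refine Finset.mem_erase.2 ⟨?_, Finset.mem_univ _⟩
        rintro rfl
        apply hfull S hSd
        apply Finset.eq_univ_of_forall
        intro w
        by_cases hw : w = y
        · rwa [hw]
        · exact h4 (Finset.mem_erase.2 ⟨hw, Finset.mem_univ _⟩)
      have hcardim : (S.image κ).card + 1 = S.card := by
        rw [him, Finset.card_erase_of_mem (Finset.mem_univ _), Finset.card_univ, hSc]
        omega
      obtain ⟨a, ha, b, hb, hab, hdup⟩ := aux_double κ S hcardim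
      have : Finset.bipartiteBelow (fun S S' => S ⊆ S') doors S = {S.erase a, S.erase b} := by
        ext S'
        rw [Finset.mem_bipartiteBelow, Finset.mem_insert, Finset.mem_singleton]
        constructor
        · rintro ⟨hd, hs⟩
          obtain ⟨-, -, h2, h3⟩ := Finset.mem_filter.1 hd
          obtain ⟨v, hv, hvS⟩ := Finset.exists_eq_insert_iff.2 ⟨hs, h3.trans hSc.symm⟩
          have hS' : S' = S.erase v := by rw [← hvS, Finset.erase_insert hv]
          have hvm : v ∈ S := by rw [← hvS]; exact Finset.mem_insert_self _ _
          rw [hS'] at h2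
          rcases (hdup v hvm).1 (h2.trans him.symm) with h | h
          · left; rw [hS', h]
          · right; rw [hS', h]
        · intro h
          have : ∃ v ∈ S, (v = a ∨ v = b) ∧ S' = S.erase v := by
            rcases h with h | h
            · exact ⟨a, ha, Or.inl rfl, h⟩
            · exact ⟨b, hb, Or.inr rfl, h⟩
          obtain ⟨v, hv, hvab, rfl⟩ := this
          refine ⟨Finset.mem_filter.2 ⟨Finset.mem_univ _, hmono _ _ (Finset.erase_subset _ _) hSd,
            ((hdup v hv).2 hvab).trans him, ?_⟩, Finset.erase_subset _ _⟩
          rw [Finset.card_erase_of_mem hv, ← hSc]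
          have := Finset.card_pos.2 ⟨v, hv⟩
          omega
      rw [this, Finset.card_pair]
      · exact even_two
      · intro he
        have : a ∉ S.erase b := by rw [← he]; simp
        exact this (Finset.mem_erase.2 ⟨hab, ha⟩)
  -- rooms above a door
  have habove : ∀ S ∈ doors, ∀ S', S' ∈ Finset.bipartiteAbove (fun S S' => S ⊆ S') rooms S ↔
      ∃ z, ExtP r S.toLeft (S.toRight)ᶜ z ∧ S' = insert z S := by
    intro S hS S'
    obtain ⟨-, h1, h2, h3⟩ := Finset.mem_filter.1 hS
    rw [Finset.mem_bipartiteAbove]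
    constructor
    · rintro ⟨hr', hs⟩
      obtain ⟨-, h4, h5⟩ := Finset.mem_filter.1 hr'
      obtain ⟨v, hv, hvS⟩ := Finset.exists_eq_insert_iff.2 ⟨hs, h3.trans h5.symm⟩
      exact ⟨v, (ext_iff_aux r S v).1 ⟨hv, by rw [hvS]; exact h4⟩, hvS.symm⟩
    · rintro ⟨z, hz, rfl⟩
      obtain ⟨hz1, hz2⟩ := (ext_iff_aux r S z).2 hz
      refine ⟨Finset.mem_filter.2 ⟨Finset.mem_univ _, hz2, ?_⟩, Finset.subset_insert _ _⟩
      rw [Finset.card_insert_of_notMem hz1, h3]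
  set S0 : Finset (T ⊕ I) := (Finset.univ.erase i0).map Function.Embedding.inr with hS0
  have hL0 : S0.toLeft = ∅ := by ext x; simp [hS0]
  have hR0 : (S0.toRight)ᶜ = {i0} := by ext x; simp [hS0]
  have hS0d : S0 ∈ doors := by
    refine Finset.mem_filter.2 ⟨Finset.mem_univ _, ?_, ?_, ?_⟩
    · show DomP r S0.toLeft (S0.toRight)ᶜ
      rw [hL0, hR0]
      intro t
      exact ⟨i0, by simp, by simp⟩
    · ext i; simp [hS0, hκ]
    · rw [hS0, Finset.card_map, Finset.card_erase_of_mem (Finset.mem_univ _), Finset.card_univ]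
      have : 0 < Fintype.card I := Fintype.card_pos_iff.2 ⟨i0⟩
      omega
  have hodd0 : (Finset.bipartiteAbove (fun S S' => S ⊆ S') rooms S0).card = 1 := by
    obtain ⟨x, hx⟩ := Finite.exists_max (r i0)
    rw [Finset.card_eq_one]
    refine ⟨insert (Sum.inl x) S0, ?_⟩
    ext S'
    rw [habove S0 hS0d, Finset.mem_singleton, hL0, hR0]
    constructor
    · rintro ⟨z, hz, rfl⟩
      rcases z with y | m
      · obtain ⟨-, hdom⟩ := hz
        obtain ⟨i, hi, hix⟩ := hdom x
        rw [Finset.mem_singleton] at hi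
        subst hi
        have := hr i (le_antisymm (hx y) (hix y (Finset.mem_insert_self _ _)))
        rw [this]
      · obtain ⟨hm, hdom⟩ := hz
        obtain ⟨i, hi, -⟩ := hdom x
        simp at hm
        subst hm
        simp at hi
    · rintro rfl
      refine ⟨Sum.inl x, ⟨by simp, fun t => ⟨i0, by simp, fun d hd => ?_⟩⟩, rfl⟩
      simp at hd
      subst hd
      exact hx t
  have heven' : ∀ S ∈ doors.erase S0,
      Even (Finset.bipartiteAbove (fun S S' => S ⊆ S') rooms S).card := by
    intro S hS
    obtain ⟨hne, hS⟩ := Finset.mem_erase.1 hS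
    obtain ⟨-, h1, h2, h3⟩ := Finset.mem_filter.1 hS
    have hLne : S.toLeft.Nonempty := by
      rw [Finset.nonempty_iff_ne_empty]
      intro he
      apply hne
      ext z
      rcases z with x | m
      · have : x ∉ S.toLeft := by rw [he]; simp
        simp at this
        simp [hS0, this]
      · have h4 : m ∈ S.image κ ↔ m ∈ Finset.univ.erase i0 := by rw [h2]
        have h5 : m ∈ S.image κ ↔ Sum.inr m ∈ S := by
          constructor
          · intro hm
            obtain ⟨z, hz, hzm⟩ := Finset.mem_image.1 hm
            rcases z with x | m'
            · have : x ∈ S.toLeft := Finset.mem_toLeft.2 hz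
              rw [he] at this
              simp at this
            · have : m' = m := hzm
              rwa [← this]
          · intro hm
            exact Finset.mem_image.2 ⟨_, hm, rfl⟩
        rw [← h5, h4]
        simp [hS0]
    have hc := S.card_toLeft_add_card_toRight
    have hc' := Finset.card_add_card_compl S.toRight
    obtain ⟨v, w, hvw, hz⟩ := ridge_two r hr S.toLeft (S.toRight)ᶜ hLne (by omega) h1
    have : Finset.bipartiteAbove (fun S S' => S ⊆ S') rooms S = {insert v S, insert w S} := by
      ext S'
      rw [habove S hS, Finset.mem_insert, Finset.mem_singleton]
      constructor
      · rintro ⟨z, hz', rfl⟩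
        rcases (hz z).1 hz' with rfl | rfl
        · exact Or.inl rfl
        · exact Or.inr rfl
      · rintro (rfl | rfl)
        · exact ⟨v, (hz v).2 (Or.inl rfl), rfl⟩
        · exact ⟨w, (hz w).2 (Or.inr rfl), rfl⟩
    rw [this, Finset.card_pair]
    · exact even_two
    · intro he
      have hvS := ((ext_iff_aux r S v).2 ((hz v).2 (Or.inl rfl))).1
      have : v ∈ insert w S := by rw [← he]; exact Finset.mem_insert_self _ _
      rcases Finset.mem_insert.1 this with h | h
      · exact hvw h
      · exact hvS h
  rw [← hcount, ← Finset.add_sum_erase _ _ hS0d, hodd0] at heven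
  have := Finset.even_sum _ heven'
  rw [Nat.even_add] at heven
  exact absurd (heven.2 this) (by decide)

end Comb2
section Brouwer
open Filter Topology

lemma fixed_of_approx {E : Type*} [MetricSpace E] {K : Set E} (hK : IsCompact K)
    (hne : K.Nonempty) (G : E → E) (hG : ContinuousOn G K)
    (h : ∀ ε > 0, ∃ x ∈ K, dist (G x) x ≤ ε) : ∃ x ∈ K, G x = x := by
  obtain ⟨x, hx, hmin⟩ := hK.exists_isMinOn hne (f := fun x => dist (G x) x)
    (continuous_dist.comp_continuousOn (hG.prodMk continuousOn_id))
  refine ⟨x, hx, ?_⟩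
  by_contra hxx
  have hpos : 0 < dist (G x) x := dist_pos.2 hxx
  obtain ⟨y, hy, hyd⟩ := h (dist (G x) x / 2) (by positivity)
  have : dist (G x) x ≤ dist (G y) y := hmin hy
  linarith

lemma brouwer_lower {I : Type*} [Fintype I] [Nonempty I]
    (f : (I → ℝ) → (I → ℝ)) (hf : ContinuousOn f (stdSimplex ℝ I))
    (hm : Set.MapsTo f (stdSimplex ℝ I) (stdSimplex ℝ I)) (ε : ℝ) (hε : 0 < ε) :
    ∃ x ∈ stdSimplex ℝ I, ∀ i, x i - ε ≤ f x i := by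
  classical
  have hcomp : IsCompact (stdSimplex ℝ I) := isCompact_stdSimplex ℝ I
  obtain ⟨δ, hδ, hunif⟩ := Metric.uniformContinuousOn_iff.1
    (hcomp.uniformContinuousOn_of_continuous hf) (ε / 2) (by positivity)
  set σ := min δ (ε / 2) with hσ
  have hσpos : 0 < σ := lt_min hδ (by positivity)
  set n : ℝ := ((Fintype.card I : ℕ) : ℝ) with hn
  have hnpos : 0 < n := by rw [hn]; exact_mod_cast Fintype.card_pos
  set η := σ / (2 * n) with hη
  have hηpos : 0 < η := by positivity
  have hησ : 2 * n * η = σ := by rw [hη]; field_simp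
  obtain ⟨ts, hts, htf, hcov⟩ := hcomp.finite_cover_balls hηpos
  obtain ⟨i0⟩ := (inferInstance : Nonempty I)
  have : Fintype ts := htf.fintype
  have hne : Nonempty ts := by
    have h1 : (Pi.single i0 1 : I → ℝ) ∈ stdSimplex ℝ I := single_mem_stdSimplex ℝ i0
    have h2 := hcov h1
    simp only [Set.mem_iUnion] at h2
    obtain ⟨x, hx, -⟩ := h2
    exact ⟨⟨x, hx⟩⟩
  have hcol : ∀ t : ts, ∃ i, (t : I → ℝ) i ≤ f t i := by
    intro t
    by_contra hcon
    push Not at hcon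
    have h1 := (hts t.2).2
    have h2 := (hm (hts t.2)).2
    have : ∑ i, f t i < ∑ i, (t : I → ℝ) i :=
      Finset.sum_lt_sum_of_nonempty ⟨i0, Finset.mem_univ _⟩ (fun i _ => hcon i)
    linarith
  choose c hc using hcol
  let r : I → ts → ℝ ×ₗ (Fin (Fintype.card ts)) :=
    fun i t => toLex ((t : I → ℝ) i, Fintype.equivFin ts t)
  have hr : ∀ i, Function.Injective (r i) := by
    intro i s t hst
    have := congrArg (fun z => (ofLex z).2) hst
    exact (Fintype.equivFin ts).injective this
  have hrle : ∀ i s t, r i s ≤ r i t → (s : I → ℝ) i ≤ (t : I → ℝ) i := by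
    intro i s t hst
    rcases (Prod.Lex.toLex_le_toLex).1 hst with h | h
    · exact h.le
    · exact h.1.le
  obtain ⟨D, C, hdom, hsub⟩ := sperner_aux r hr c i0
  have hCne : C.Nonempty := by
    obtain ⟨i, hi, -⟩ := hdom (Classical.arbitrary ts)
    exact ⟨i, hi⟩
  have hDne : D.Nonempty := by
    obtain ⟨i, hi⟩ := hCne
    obtain ⟨d, hd, -⟩ := Finset.mem_image.1 (hsub hi)
    exact ⟨d, hd⟩
  have hm' : ∀ i : I, ∃ d ∈ D, ∀ d' ∈ D, (d : I → ℝ) i ≤ (d' : I → ℝ) i :=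
    fun i => Finset.exists_min_image D (fun d => (d : I → ℝ) i) hDne
  choose μ hμD hμ using hm'
  set m : I → ℝ := fun i => (μ i : I → ℝ) i with hmdef
  have hm0 : ∀ i, 0 ≤ m i := fun i => (hts (μ i).2).1 i
  have hdle : ∀ d ∈ D, ∑ i ∈ C, (d : I → ℝ) i ≤ 1 := by
    intro d hd
    rw [← (hts d.2).2]
    exact Finset.sum_le_sum_of_subset_of_nonneg (Finset.subset_univ _)
      (fun i _ _ => (hts d.2).1 i)
  have hCcard : (C.card : ℝ) ≤ n := by rw [hn]; exact_mod_cast Finset.card_le_univ C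
  have hs : 1 - σ < ∑ i ∈ C, m i := by
    by_contra hcon
    push Not at hcon
    obtain ⟨i1, hi1⟩ := hCne
    set q : ℝ := 1 - ∑ i ∈ C, (m i + 2 * η) with hq
    have hq0 : 0 ≤ q := by
      rw [hq, Finset.sum_add_distrib, Finset.sum_const, nsmul_eq_mul]
      nlinarith
    let p : I → ℝ := fun i => (if i ∈ C then m i + 2 * η else 0) + (if i = i1 then q else 0)
    have hp : p ∈ stdSimplex ℝ I := by
      constructor
      · intro i
        have := hm0 i
        show 0 ≤ (if i ∈ C then m i + 2 * η else 0) + (if i = i1 then q else 0)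
        apply add_nonneg
        · split_ifs
          · positivity
          · exact le_rfl
        · split_ifs
          · exact hq0
          · exact le_rfl
      · show ∑ i, ((if i ∈ C then m i + 2 * η else 0) + (if i = i1 then q else 0)) = 1
        rw [Finset.sum_add_distrib, Finset.sum_ite_mem, Finset.univ_inter,
          Finset.sum_ite_eq' Finset.univ i1 (fun _ => q)]
        simp [hq]
    have h2 := hcov hp
    simp only [Set.mem_iUnion] at h2
    obtain ⟨t, ht, htp⟩ := h2
    obtain ⟨i, hi, hit⟩ := hdom ⟨t, ht⟩
    have h3 := hrle i _ _ (hit _ (hμD i))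
    have h4 : dist (p i) (t i) < η := lt_of_le_of_lt (dist_le_pi_dist p t i) htp
    rw [Real.dist_eq] at h4
    have h5 := (abs_lt.1 h4).2
    have h6 : m i + 2 * η ≤ p i := by
      show m i + 2 * η ≤ (if i ∈ C then m i + 2 * η else 0) + (if i = i1 then q else 0)
      rw [if_pos hi]
      split_ifs <;> linarith
    have h7 : t i ≤ m i := h3
    linarith
  have hin : ∀ d ∈ D, ∀ i ∈ C, (d : I → ℝ) i - m i < σ := by
    intro d hd i hi
    have h1 : (d : I → ℝ) i - m i ≤ ∑ j ∈ C, ((d : I → ℝ) j - m j) :=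
      Finset.single_le_sum (f := fun j => (d : I → ℝ) j - m j)
        (fun j _ => sub_nonneg.2 (hμ j d hd)) hi
    rw [Finset.sum_sub_distrib] at h1
    have := hdle d hd
    linarith
  have hout : ∀ d ∈ D, ∀ i, i ∉ C → (d : I → ℝ) i < σ := by
    intro d hd i hi
    have h1 : ∑ j ∈ insert i C, (d : I → ℝ) j ≤ 1 := by
      rw [← (hts d.2).2]
      exact Finset.sum_le_sum_of_subset_of_nonneg (Finset.subset_univ _)
        (fun i _ _ => (hts d.2).1 i)
    rw [Finset.sum_insert hi] at h1
    have h2 : ∑ j ∈ C, m j ≤ ∑ j ∈ C, (d : I → ℝ) j :=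
      Finset.sum_le_sum (fun j _ => hμ j d hd)
    linarith
  have hclose : ∀ d ∈ D, ∀ d' ∈ D, ∀ i, |(d : I → ℝ) i - (d' : I → ℝ) i| < σ := by
    intro d hd d' hd' i
    by_cases hi : i ∈ C
    · have h1 := hin d hd i hi
      have h2 := hin d' hd' i hi
      have h3 : m i ≤ (d : I → ℝ) i := hμ i d hd
      have h4 : m i ≤ (d' : I → ℝ) i := hμ i d' hd'
      rw [abs_lt]; constructor <;> linarith
    · have h1 := hout d hd i hi
      have h2 := hout d' hd' i hi
      have h3 : 0 ≤ (d : I → ℝ) i := (hts d.2).1 i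
      have h4 : 0 ≤ (d' : I → ℝ) i := (hts d'.2).1 i
      rw [abs_lt]; constructor <;> linarith
  obtain ⟨x, hx⟩ := hDne
  have hσ1 : σ ≤ δ := min_le_left _ _
  have hσ2 : σ ≤ ε / 2 := min_le_right _ _
  refine ⟨x, hts x.2, fun i => ?_⟩
  by_cases hi : i ∈ C
  · obtain ⟨d, hd, rfl⟩ := Finset.mem_image.1 (hsub hi)
    have h1 := hc d
    have h2 : dist (x : I → ℝ) d < δ := by
      rw [dist_pi_lt_iff hδ]
      intro j
      exact lt_of_lt_of_le (hclose x hx d hd j) hσ1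
    have h3 := lt_of_le_of_lt (dist_le_pi_dist (f x) (f d) (c d)) (hunif x (hts x.2) d (hts d.2) h2)
    rw [Real.dist_eq] at h3
    have h4 := (abs_lt.1 h3).1
    have h5 := (abs_lt.1 (hclose x hx d hd (c d))).2
    linarith
  · have h1 := hout x hx i hi
    have h2 := (hm (hts x.2)).1 i
    linarith

lemma brouwer_simplex {I : Type*} [Fintype I] [Nonempty I]
    (f : (I → ℝ) → (I → ℝ)) (hf : ContinuousOn f (stdSimplex ℝ I))
    (hm : Set.MapsTo f (stdSimplex ℝ I) (stdSimplex ℝ I)) :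
    ∃ x ∈ stdSimplex ℝ I, f x = x := by
  classical
  obtain ⟨i0⟩ := (inferInstance : Nonempty I)
  refine fixed_of_approx (isCompact_stdSimplex ℝ I) ⟨_, single_mem_stdSimplex ℝ i0⟩ f hf ?_
  intro ε hε
  set n : ℝ := ((Fintype.card I : ℕ) : ℝ) with hn
  have hnpos : 1 ≤ n := by rw [hn]; exact_mod_cast Fintype.card_pos
  obtain ⟨x, hx, hxf⟩ := brouwer_lower f hf hm (ε / n) (by positivity)
  refine ⟨x, hx, ?_⟩
  rw [dist_pi_le_iff hε.le]
  intro i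
  have h1 : ∑ j, (f x j - x j + ε / n) = ε := by
    rw [Finset.sum_add_distrib, Finset.sum_sub_distrib, hx.2, (hm hx).2, Finset.sum_const,
      Finset.card_univ, nsmul_eq_mul, ← hn]
    field_simp
    ring
  have h2 := Finset.single_le_sum (f := fun j => f x j - x j + ε / n)
    (fun j _ => by have := hxf j; show 0 ≤ f x j - x j + ε / n; linarith) (Finset.mem_univ i)
  simp only [h1] at h2
  have h3 := hxf i
  have h4 : ε / n ≤ ε := div_le_self hε.le hnpos
  have h5 : 0 < ε / n := by positivity
  rw [Real.dist_eq, abs_le]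
  constructor <;> linarith

lemma schauder {E : Type*} [NormedAddCommGroup E] [NormedSpace ℝ E] {K : Set E}
    (hK : IsCompact K) (hconv : Convex ℝ K) (hne : K.Nonempty) (G : E → E)
    (hG : ContinuousOn G K) (hm : Set.MapsTo G K K) : ∃ x ∈ K, G x = x := by
  classical
  refine fixed_of_approx hK hne G hG ?_
  intro ε hε
  obtain ⟨P, hP, hPf, hcov⟩ := hK.finite_cover_balls hε
  have : Fintype P := hPf.fintype
  have hPne : Nonempty P := by
    obtain ⟨x, hx⟩ := hne
    have h2 := hcov hx
    simp only [Set.mem_iUnion] at h2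
    obtain ⟨x, hx, -⟩ := h2
    exact ⟨⟨x, hx⟩⟩
  let w : P → E → ℝ := fun p y => max 0 (ε - dist y p)
  have hw0 : ∀ p y, 0 ≤ w p y := fun p y => le_max_left _ _
  have hwc : ∀ p, Continuous (w p) := fun p => by fun_prop
  let W : E → ℝ := fun y => ∑ p, w p y
  have hWc : Continuous W := continuous_finsetSum _ (fun p _ => hwc p)
  have hWpos : ∀ y ∈ K, 0 < W y := by
    intro y hy
    have h2 := hcov hy
    simp only [Set.mem_iUnion] at h2
    obtain ⟨x, hx, hxy⟩ := h2
    refine Finset.sum_pos' (fun p _ => hw0 p y) ⟨⟨x, hx⟩, Finset.mem_univ _, ?_⟩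
    have : dist y x < ε := hxy
    exact lt_max_of_lt_right (by simpa using this)
  let Y : (P → ℝ) → E := fun l => ∑ p, l p • (p : E)
  have hYc : Continuous Y := by fun_prop
  have hYK : ∀ l ∈ stdSimplex ℝ P, Y l ∈ K := fun l hl =>
    hconv.sum_mem (fun p _ => hl.1 p) hl.2 (fun p _ => hP p.2)
  let f : (P → ℝ) → (P → ℝ) := fun l p => w p (G (Y l)) / W (G (Y l))
  have hGY : ContinuousOn (fun l => G (Y l)) (stdSimplex ℝ P) :=
    hG.comp hYc.continuousOn hYK
  have hfc : ContinuousOn f (stdSimplex ℝ P) := by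
    rw [continuousOn_pi]
    intro p
    exact ContinuousOn.div ((hwc p).comp_continuousOn hGY) (hWc.comp_continuousOn hGY)
      (fun l hl => (hWpos _ (hm (hYK l hl))).ne')
  have hfm : Set.MapsTo f (stdSimplex ℝ P) (stdSimplex ℝ P) := by
    intro l hl
    have hpos := hWpos _ (hm (hYK l hl))
    refine ⟨fun p => div_nonneg (hw0 _ _) hpos.le, ?_⟩
    show ∑ p, w p (G (Y l)) / W (G (Y l)) = 1
    rw [← Finset.sum_div]
    exact div_self hpos.ne'
  obtain ⟨l, hl, hfl⟩ := brouwer_simplex f hfc hfm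
  refine ⟨Y l, hYK l hl, ?_⟩
  have hsum : G (Y l) - Y l = ∑ p, l p • (G (Y l) - (p : E)) := by
    simp only [smul_sub]
    rw [Finset.sum_sub_distrib, ← Finset.sum_smul, hl.2, one_smul]
  rw [dist_eq_norm, hsum]
  calc ‖∑ p, l p • (G (Y l) - (p : E))‖ ≤ ∑ p, ‖l p • (G (Y l) - (p : E))‖ := norm_sum_le _ _
    _ ≤ ∑ p, l p * ε := by
        apply Finset.sum_le_sum
        intro p _
        rw [norm_smul, Real.norm_of_nonneg (hl.1 p)]
        by_cases hlp : l p = 0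
        · simp [hlp]
        · apply mul_le_mul_of_nonneg_left _ (hl.1 p)
          by_contra hcon
          push Not at hcon
          apply hlp
          rw [← hfl]
          have : w p (G (Y l)) = 0 := max_eq_left (by rw [dist_eq_norm]; linarith)
          show w p (G (Y l)) / W (G (Y l)) = 0
          rw [this, zero_div]
    _ = ε := by rw [← Finset.sum_mul, hl.2, one_mul]

end Brouwer
section Monch
open Filter Topology

lemma sep_image {E : Type*} [NormedAddCommGroup E] {U D : Set E} {G : E → E}
    (hG : ContinuousOn G U) (hD : D ⊆ U) (hs : TopologicalSpace.IsSeparable D) :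
    TopologicalSpace.IsSeparable (G '' D) := by
  obtain ⟨t, htD, htc, hcl⟩ := hs.exists_countable_dense_subset
  refine ((htc.image G).isSeparable.closure).mono ?_
  rintro _ ⟨x, hx, rfl⟩
  exact ((hG x (hD hx)).mono (htD.trans hD)).mem_closure_image (hcl hx)

lemma monch {E : Type*} [NormedAddCommGroup E] [NormedSpace ℝ E] {U : Set E}
    (hUc : IsClosed U) (hUconv : Convex ℝ U) (h0 : (0 : E) ∈ U) (G : E → E)
    (hG : ContinuousOn G U) (hm : Set.MapsTo G U U)
    (h : ∀ C ⊆ U, C.Countable → C ⊆ closure (convexHull ℝ ({0} ∪ G '' C)) →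
      IsCompact (closure C)) : ∃ x ∈ U, G x = x := by
  let D : ℕ → Set E := fun n => Nat.rec {0} (fun _ A => convexHull ℝ ({0} ∪ G '' A)) n
  have hD0 : D 0 = {0} := rfl
  have hDs : ∀ n, D (n + 1) = convexHull ℝ ({0} ∪ G '' D n) := fun n => rfl
  have hDU : ∀ n, D n ⊆ U := by
    intro n
    induction n with
    | zero => rw [hD0]; simpa using h0
    | succ n ih =>
      rw [hDs]
      refine convexHull_min (Set.union_subset (by simpa using h0) ?_) hUconv
      rintro _ ⟨x, hx, rfl⟩
      exact hm (ih hx)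
  have hDsep : ∀ n, TopologicalSpace.IsSeparable (D n) := by
    intro n
    induction n with
    | zero => rw [hD0]; exact (Set.countable_singleton _).isSeparable
    | succ n ih =>
      rw [hDs]
      have h1 : TopologicalSpace.IsSeparable ({0} ∪ G '' D n) :=
        ((Set.countable_singleton _).isSeparable).union (sep_image hG (hDU n) ih)
      refine (h1.span (R := ℝ)).mono ?_
      exact convexHull_min Submodule.subset_span (Submodule.span ℝ _).convex
  have hDmono : Monotone D := by
    apply monotone_nat_of_le_succ
    intro n
    induction n with
    | zero =>
      rw [hD0, hDs]
      exact Set.subset_union_left.trans (subset_convexHull ℝ _)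
    | succ n ih =>
      rw [hDs n, hDs (n + 1)]
      exact convexHull_mono (Set.union_subset_union_right _ (Set.image_mono ih))
  have hDconv : ∀ n, Convex ℝ (D n) := by
    intro n
    cases n with
    | zero => rw [hD0]; exact convex_singleton _
    | succ n => rw [hDs]; exact convex_convexHull _ _
  set S : Set E := ⋃ n, D n with hS
  have hSU : S ⊆ U := Set.iUnion_subset hDU
  have hSconv : Convex ℝ S := hDmono.directed_le.convex_iUnion hDconv
  have hSsep : TopologicalSpace.IsSeparable S := TopologicalSpace.IsSeparable.iUnion hDsep
  have hGS : ∀ x ∈ S, G x ∈ S := by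
    intro x hx
    obtain ⟨n, hn⟩ := Set.mem_iUnion.1 hx
    refine Set.mem_iUnion.2 ⟨n + 1, ?_⟩
    rw [hDs]
    exact subset_convexHull ℝ _ (Or.inr ⟨x, hn, rfl⟩)
  obtain ⟨C, hCS, hCc, hCd⟩ := hSsep.exists_countable_dense_subset
  have hhull : ∀ x ∈ S, x ∈ closure (convexHull ℝ ({0} ∪ G '' C)) := by
    intro x hx
    obtain ⟨n, hn⟩ := Set.mem_iUnion.1 hx
    have hx' : x ∈ D (n + 1) := hDmono (Nat.le_succ n) hn
    rw [hDs] at hx'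
    refine convexHull_min (Set.union_subset ?_ ?_) (convex_convexHull ℝ _).closure hx'
    · exact (Set.subset_union_left.trans (subset_convexHull ℝ _)).trans subset_closure
    · rintro _ ⟨y, hy, rfl⟩
      have hyS : y ∈ S := Set.mem_iUnion.2 ⟨n, hy⟩
      have h1 : G y ∈ closure (G '' C) :=
        ((hG y (hSU hyS)).mono (hCS.trans hSU)).mem_closure_image (hCd hyS)
      exact closure_mono (Set.subset_union_right.trans (subset_convexHull ℝ _)) h1
  have hcomp := h C (hCS.trans hSU) hCc (fun x hx => hhull x (hCS hx))
  have hclo : closure C = closure S :=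
    Set.Subset.antisymm (closure_mono hCS) (closure_minimal hCd isClosed_closure)
  rw [hclo] at hcomp
  have hKU : closure S ⊆ U := closure_minimal hSU hUc
  obtain ⟨x, hx, hxG⟩ := schauder hcomp hSconv.closure
    ⟨0, subset_closure (Set.mem_iUnion.2 ⟨0, by rw [hD0]; rfl⟩)⟩ G (hG.mono hKU) (by
      intro x hx
      have h1 : G x ∈ closure (G '' S) :=
        ((hG x (hKU hx)).mono hSU).mem_closure_image hx
      refine closure_mono ?_ h1
      rintro _ ⟨y, hy, rfl⟩
      exact hGS y hy)
  exact ⟨x, hKU hx, hxG⟩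

/-- Leray-Schauder type alternative, with an abstract gauge. -/
lemma monch_ls {E : Type*} [NormedAddCommGroup E] [NormedSpace ℝ E] (g : E → ℝ)
    (hgc : Continuous g) (hg0 : g 0 = 0) (hgs : ∀ (c : ℝ) u, 0 ≤ c → g (c • u) = c * g u)
    (hgadd : ∀ u v, g (u + v) ≤ g u + g v) (N : E → E)
    (hN : ContinuousOn N {u | g u ≤ 1})
    (h3 : ∀ u, g u ≤ 1 → ∀ l : ℝ, 0 < l → l < 1 → u = l • N u → g u < 1)
    (h4 : ∀ C ⊆ {u | g u ≤ 1}, C.Countable → C ⊆ closure (convexHull ℝ ({0} ∪ N '' C)) →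
      IsCompact (closure C)) : ∃ u, g u ≤ 1 ∧ N u = u := by
  set U : Set E := {u | g u ≤ 1} with hU
  have hUc : IsClosed U := isClosed_le hgc continuous_const
  have hUconv : Convex ℝ U := by
    intro x hx y hy s t hs ht hst
    have hx' : g x ≤ 1 := hx
    have hy' : g y ≤ 1 := hy
    show g (s • x + t • y) ≤ 1
    have := hgadd (s • x) (t • y)
    rw [hgs _ _ hs, hgs _ _ ht] at this
    nlinarith
  have h0 : (0 : E) ∈ U := by show g 0 ≤ 1; rw [hg0]; norm_num
  let q : E → ℝ := fun u => (max 1 (g u))⁻¹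
  have hmax : ∀ u, 0 < max 1 (g u) := fun u => lt_max_of_lt_left one_pos
  have hqc : Continuous q := (continuous_const.max hgc).inv₀ (fun u => (hmax u).ne')
  have hq0 : ∀ u, 0 < q u := fun u => inv_pos.2 (hmax u)
  have hq1 : ∀ u, q u ≤ 1 := fun u => inv_le_one_of_one_le₀ (le_max_left _ _)
  let G : E → E := fun u => q (N u) • N u
  have hG : ContinuousOn G U := (hqc.comp_continuousOn hN).smul hN
  have hm : Set.MapsTo G U U := by
    intro u _
    show g (q (N u) • N u) ≤ 1
    rw [hgs _ _ (hq0 _).le]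
    show (max 1 (g (N u)))⁻¹ * g (N u) ≤ 1
    rw [inv_mul_le_iff₀ (hmax _), mul_one]
    exact le_max_right _ _
  obtain ⟨u, hu, hGu⟩ := monch hUc hUconv h0 G hG hm (by
    intro C hC hCc hCs
    refine h4 C hC hCc (hCs.trans (closure_mono (convexHull_min ?_ (convex_convexHull ℝ _))))
    rintro x (hx | ⟨y, hy, rfl⟩)
    · exact subset_convexHull ℝ _ (Or.inl hx)
    · have h1 : (0 : E) ∈ convexHull ℝ ({0} ∪ N '' C) := subset_convexHull ℝ _ (Or.inl rfl)
      have h2 : N y ∈ convexHull ℝ ({0} ∪ N '' C) := subset_convexHull ℝ _ (Or.inr ⟨y, hy, rfl⟩)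
      exact (convex_convexHull ℝ _).smul_mem_of_zero_mem h1 h2 ⟨(hq0 _).le, hq1 _⟩)
  refine ⟨u, hu, ?_⟩
  have hGu' : q (N u) • N u = u := hGu
  rcases le_or_gt (g (N u)) 1 with hle | hlt
  · have : q (N u) = 1 := by
      show (max 1 (g (N u)))⁻¹ = 1
      rw [max_eq_left hle, inv_one]
    rwa [this, one_smul] at hGu'
  · exfalso
    have hq : q (N u) = (g (N u))⁻¹ := by
      show (max 1 (g (N u)))⁻¹ = _
      rw [max_eq_right hlt.le]
    have h5 := h3 u hu (q (N u)) (hq0 _) (by rw [hq]; exact inv_lt_one_of_one_lt₀ hlt) hGu'.symm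
    rw [← hGu', hgs _ _ (hq0 _).le, hq, inv_mul_cancel₀ (by positivity)] at h5
    exact lt_irrefl _ h5

end Monch
section MainAux

lemma N_bound
    {X : Type*} [NormedAddCommGroup X] [NormedSpace ℝ X]
    {a : ℝ} (T : ℝ → ℝ → X →L[ℝ] X)
    (hTcont : ContinuousOn (fun p : ℝ × ℝ => T p.1 p.2)
      {p : ℝ × ℝ | 0 ≤ p.2 ∧ p.2 ≤ p.1 ∧ p.1 ≤ a})
    {M : ℝ} (hM : 0 < M)
    (hTM : ∀ t s : ℝ, 0 ≤ s → s ≤ t → t ≤ a → ‖T t s‖ ≤ M)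
    (φ ψ : ℝ → X) (hφ : IntegrableOn φ (Set.Icc 0 a)) (hψ : IntegrableOn ψ (Set.Icc 0 a))
    (t : ℝ) (ht : t ∈ Set.Icc (0:ℝ) a) :
    ‖(∫ s in (0:ℝ)..t, T t s (φ s)) - ∫ s in (0:ℝ)..t, T t s (ψ s)‖ ≤
      M * ∫ s in Set.Icc (0:ℝ) a, ‖φ s - ψ s‖ := by
  have hsub : Set.Ioc 0 t ⊆ Set.Icc 0 a := fun s hs => ⟨hs.1.le, hs.2.trans ht.2⟩
  have hmeas : AEStronglyMeasurable (fun s => T t s) (volume.restrict (Set.Ioc 0 t)) := by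
    refine ContinuousOn.aestronglyMeasurable ?_ measurableSet_Ioc
    have : ContinuousOn (fun s : ℝ => (t, s)) (Set.Ioc 0 t) := by fun_prop
    exact hTcont.comp this (fun s hs => ⟨hs.1.le, hs.2, ht.2⟩)
  have hTint : ∀ χ : ℝ → X, IntegrableOn χ (Set.Icc 0 a) →
      IntegrableOn (fun s => T t s (χ s)) (Set.Ioc 0 t) := by
    intro χ hχ
    have hχ' := hχ.mono_set hsub
    refine Integrable.mono' (hχ'.norm.const_mul M) ?_ ?_
    · exact (ContinuousLinearMap.id ℝ (X →L[ℝ] X)).aestronglyMeasurable_comp₂ hmeas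
        hχ'.aestronglyMeasurable
    · refine (ae_restrict_iff' measurableSet_Ioc).2 (Filter.Eventually.of_forall ?_)
      intro s hs
      exact (T t s).le_of_opNorm_le (hTM t s hs.1.le hs.2 ht.2) _
  have hd : IntegrableOn (fun s => ‖φ s - ψ s‖) (Set.Icc 0 a) := (hφ.sub hψ).norm
  rw [intervalIntegral.integral_of_le ht.1, intervalIntegral.integral_of_le ht.1,
    ← integral_sub (hTint φ hφ) (hTint ψ hψ)]
  calc ‖∫ s in Set.Ioc 0 t, (T t s (φ s) - T t s (ψ s))‖
      ≤ ∫ s in Set.Ioc 0 t, M * ‖φ s - ψ s‖ := by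
        refine norm_integral_le_of_norm_le ((hd.mono_set hsub).const_mul M) ?_
        refine (ae_restrict_iff' measurableSet_Ioc).2 (Filter.Eventually.of_forall ?_)
        intro s hs
        rw [← map_sub]
        exact (T t s).le_of_opNorm_le (hTM t s hs.1.le hs.2 ht.2) _
    _ = M * ∫ s in Set.Ioc 0 t, ‖φ s - ψ s‖ := integral_const_mul _ _
    _ ≤ M * ∫ s in Set.Icc (0:ℝ) a, ‖φ s - ψ s‖ := by
        refine mul_le_mul_of_nonneg_left ?_ hM.le
        exact setIntegral_mono_set hd (Filter.Eventually.of_forall fun s => norm_nonneg _)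
          hsub.eventuallyLE

end MainAux

/-- **Existence principle (Theorem 2.1).** Under (h1), (h2), (h3⁰) and (h4⁰) the
operator `N` has a fixed point in `Ū`, i.e. the nonlocal problem has a mild solution. -/
theorem stmt_1
    {X : Type*} [NormedAddCommGroup X] [NormedSpace ℝ X] [CompleteSpace X]
    -- the interval [0,a]
    {a : ℝ} (ha : 0 < a)
    -- the evolution operator T on Δ, continuous in operator norm, with bound M
    (T : ℝ → ℝ → X →L[ℝ] X)
    (hTcont : ContinuousOn (fun p : ℝ × ℝ => T p.1 p.2)
      {p : ℝ × ℝ | 0 ≤ p.2 ∧ p.2 ≤ p.1 ∧ p.1 ≤ a})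
    (hTid : ∀ s ∈ Set.Icc (0:ℝ) a, T s s = ContinuousLinearMap.id ℝ X)
    (hTsemi : ∀ s r t : ℝ, 0 ≤ s → s ≤ r → r ≤ t → t ≤ a → (T t r).comp (T r s) = T t s)
    {M : ℝ} (hM : 0 < M)
    (hTM : ∀ t s : ℝ, 0 ≤ s → s ≤ t → t ≤ a → ‖T t s‖ ≤ M)
    -- the radius function R
    (R : ℝ → ℝ) (hRc : ContinuousOn R (Set.Icc 0 a))
    (hRpos : ∀ t ∈ Set.Icc (0:ℝ) a, 0 < R t)
    -- (h1): Φ maps Ū into Bochner-integrable functions, continuously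
    (Φ : C(Set.Icc (0:ℝ) a, X) → ℝ → X)
    (hΦint : ∀ u ∈ UbarSet (X := X) a R, IntegrableOn (Φ u) (Set.Icc 0 a))
    (hΦcont : ∀ (v : ℕ → C(Set.Icc (0:ℝ) a, X)) (u : C(Set.Icc (0:ℝ) a, X)),
      (∀ n, v n ∈ UbarSet (X := X) a R) → u ∈ UbarSet (X := X) a R →
      Filter.Tendsto (fun n => ‖v n - u‖) Filter.atTop (nhds 0) →
      Filter.Tendsto (fun n => ∫ s in Set.Icc (0:ℝ) a, ‖Φ (v n) s - Φ u s‖)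
        Filter.atTop (nhds 0))
    -- (h2): F is linear continuous and x ↦ x - F(T(·,0)x) has a (bounded linear) inverse B
    (F : C(Set.Icc (0:ℝ) a, X) →L[ℝ] X) (B : X →L[ℝ] X)
    (W : X → C(Set.Icc (0:ℝ) a, X))
    (hW : ∀ (x : X) (t : Set.Icc (0:ℝ) a), W x t = T (t : ℝ) 0 x)
    (hBleft : ∀ x : X, B (x - F (W x)) = x)
    (hBright : ∀ x : X, B x - F (W (B x)) = x)
    -- the operator N of the problem
    (N : C(Set.Icc (0:ℝ) a, X) → C(Set.Icc (0:ℝ) a, X))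
    (hN : ∀ u ∈ UbarSet (X := X) a R, ∃ v : C(Set.Icc (0:ℝ) a, X),
      (∀ t : Set.Icc (0:ℝ) a, v t = ∫ s in (0:ℝ)..(t : ℝ), T (t : ℝ) s (Φ u s)) ∧
      ∀ t : Set.Icc (0:ℝ) a,
        N u t = T (t : ℝ) 0 (B (F v)) + ∫ s in (0:ℝ)..(t : ℝ), T (t : ℝ) s (Φ u s))
    -- (h3⁰)
    (h30 : ∀ u ∈ UbarSet (X := X) a R, ∀ lam : ℝ, 0 < lam → lam < 1 →
      (∀ t : Set.Icc (0:ℝ) a, u t = lam • N u t) →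
      ∀ t : Set.Icc (0:ℝ) a, ‖u t‖ < R t)
    -- (h4⁰)
    (h40 : ∀ C : Set C(Set.Icc (0:ℝ) a, X), C ⊆ UbarSet (X := X) a R → C.Countable →
      C ⊆ closure (convexHull ℝ ({0} ∪ N '' C)) → IsCompact (closure C)) :
    ∃ u ∈ UbarSet (X := X) a R, N u = u := by
  have h0mem : (0:ℝ) ∈ Set.Icc (0:ℝ) a := ⟨le_rfl, ha.le⟩
  -- continuity of N
  have hNcont : ContinuousOn N (UbarSet (X := X) a R) := by
    have hbd : ∀ u ∈ UbarSet (X := X) a R, ∀ u' ∈ UbarSet (X := X) a R,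
        ‖N u - N u'‖ ≤ (M * (‖B‖ * (‖F‖ * M)) + M) *
          ∫ s in Set.Icc (0:ℝ) a, ‖Φ u s - Φ u' s‖ := by
      intro u hu u' hu'
      obtain ⟨v, hv, hNu⟩ := hN u hu
      obtain ⟨v', hv', hNu'⟩ := hN u' hu'
      set J := ∫ s in Set.Icc (0:ℝ) a, ‖Φ u s - Φ u' s‖ with hJ
      have hJ0 : 0 ≤ J := integral_nonneg (fun s => norm_nonneg _)
      have hb := fun t ht => N_bound T hTcont hM hTM (Φ u) (Φ u') (hΦint u hu) (hΦint u' hu') t ht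
      have hvv : ‖v - v'‖ ≤ M * J := by
        rw [ContinuousMap.norm_le _ (by positivity)]
        intro t
        rw [ContinuousMap.sub_apply, hv, hv']
        exact hb t t.2
      rw [ContinuousMap.norm_le _ (by positivity)]
      intro t
      rw [ContinuousMap.sub_apply, hNu, hNu', add_sub_add_comm, ← map_sub, ← map_sub, ← map_sub]
      refine (norm_add_le _ _).trans ?_
      have h1 : ‖T (t : ℝ) 0 (B (F (v - v')))‖ ≤ M * (‖B‖ * (‖F‖ * (M * J))) := by
        refine ((T (t : ℝ) 0).le_of_opNorm_le (hTM t 0 le_rfl t.2.1 t.2.2) _).trans ?_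
        gcongr
        refine (B.le_opNorm _).trans ?_
        gcongr
        refine (F.le_opNorm _).trans ?_
        gcongr
      have h2 := hb t t.2
      calc _ ≤ M * (‖B‖ * (‖F‖ * (M * J))) + M * J := add_le_add h1 h2
        _ = _ := by ring
    rw [continuousOn_iff_continuous_domRestrict, continuous_iff_seqContinuous]
    intro x p hx
    rw [tendsto_iff_norm_sub_tendsto_zero]
    have hx' : Filter.Tendsto (fun n => ‖(x n : C(Set.Icc (0:ℝ) a, X)) - p‖) Filter.atTop
        (nhds 0) := by
      rw [← tendsto_iff_norm_sub_tendsto_zero]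
      exact (continuous_subtype_val.tendsto p).comp hx
    have h1 := hΦcont (fun n => x n) p (fun n => (x n).2) p.2 hx'
    have h2 := h1.const_mul (M * (‖B‖ * (‖F‖ * M)) + M)
    rw [mul_zero] at h2
    exact squeeze_zero (fun n => norm_nonneg _) (fun n => hbd _ (x n).2 _ p.2) h2
  -- the gauge
  have hRi : Continuous (fun t : Set.Icc (0:ℝ) a => (R t)⁻¹) :=
    (continuousOn_iff_continuous_domRestrict.1 hRc).inv₀ (fun t => (hRpos t t.2).ne')
  let ρ : C(Set.Icc (0:ℝ) a, ℝ) := ⟨fun t => (R t)⁻¹, hRi⟩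
  have hρ0 : ∀ t : Set.Icc (0:ℝ) a, 0 < ρ t := fun t => inv_pos.2 (hRpos t t.2)
  let P : C(Set.Icc (0:ℝ) a, X) →ₗ[ℝ] C(Set.Icc (0:ℝ) a, X) :=
    { toFun := fun u => ⟨fun t => ρ t • u t, ρ.continuous.smul u.continuous⟩
      map_add' := fun u v => by ext t; simp
      map_smul' := fun c u => by ext t; exact smul_comm (ρ t) c (u t) }
  have hP : ∀ u t, ‖P u t‖ = ρ t * ‖u t‖ := by
    intro u t
    show ‖ρ t • u t‖ = _
    rw [norm_smul, Real.norm_of_nonneg (hρ0 t).le]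
  have hPc : Continuous P := by
    refine (P.mkContinuous ‖ρ‖ ?_).continuous
    intro u
    rw [ContinuousMap.norm_le _ (by positivity)]
    intro t
    rw [hP]
    have h1 := ρ.norm_coe_le_norm t
    rw [Real.norm_of_nonneg (hρ0 t).le] at h1
    have h2 := u.norm_coe_le_norm t
    have := (hρ0 t).le
    gcongr
  have hle : ∀ (u : C(Set.Icc (0:ℝ) a, X)) (t : Set.Icc (0:ℝ) a), ρ t * ‖u t‖ ≤ 1 ↔ ‖u t‖ ≤ R t := by
    intro u t
    show (R t)⁻¹ * ‖u t‖ ≤ 1 ↔ _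
    rw [inv_mul_le_iff₀ (hRpos t t.2), mul_one]
  have hlt : ∀ (u : C(Set.Icc (0:ℝ) a, X)) (t : Set.Icc (0:ℝ) a), ρ t * ‖u t‖ < 1 ↔ ‖u t‖ < R t := by
    intro u t
    show (R t)⁻¹ * ‖u t‖ < 1 ↔ _
    rw [inv_mul_lt_iff₀ (hRpos t t.2), mul_one]
  have hUeq : {u | ‖P u‖ ≤ 1} = UbarSet (X := X) a R := by
    ext u
    show ‖P u‖ ≤ 1 ↔ ∀ t : Set.Icc (0:ℝ) a, ‖u t‖ ≤ R t
    rw [ContinuousMap.norm_le _ zero_le_one]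
    exact forall_congr' fun t => by rw [hP, hle]
  obtain ⟨u, hu, hfix⟩ := monch_ls (fun u => ‖P u‖) hPc.norm (by simp)
    (fun c u hc => by
      show ‖P (c • u)‖ = c * ‖P u‖
      rw [map_smul, norm_smul, Real.norm_of_nonneg hc])
    (fun u v => by
      show ‖P (u + v)‖ ≤ ‖P u‖ + ‖P v‖
      rw [map_add]; exact norm_add_le _ _) N (by rw [hUeq]; exact hNcont)
    (by
      intro u hu l hl0 hl1 hul
      have hu' : u ∈ UbarSet (X := X) a R := by rw [← hUeq]; exact hu
      have h1 := h30 u hu' l hl0 hl1 (fun t => by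
        conv_lhs => rw [hul]
        rfl)
      rw [ContinuousMap.norm_lt_iff _ zero_lt_one]
      intro t
      rw [hP, hlt]
      exact h1 t)
    (by
      intro C hC hCc hCs
      rw [hUeq] at hC
      exact h40 C hC hCc hCs)
  refine ⟨u, ?_, hfix⟩
  rw [← hUeq]
  exact hu
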